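/- Let L be an ideal lattice. The assignments a ↦ V(a) = {p ∈ Spec L : a ≤ p} and Y ↦ inf Y induce mutually inverse, order-reversing bijections between the set of semi-prime elements of L and the set of closed subsets of Spec L. Precisely: for every semi-prime a ∈ L, inf V(a) = a; and for every closed subset Y ⊆ Spec L, inf Y is semi-prime and V(inf Y) = Y. -/

import Mathlib

open CompleteLattice TopologicalSpace

/-- An ideal lattice: a complete, compactly generated lattice with an associative
multiplication distributing over finite suprema, for which `⊤` is a compact
two-sided identity and products of compact elements are compact. -/
structure IsIdealLattice (α : Type*) [CompleteLattice α] [Mul α] : Prop where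
  mul_assoc : ∀ a b c : α, a * b * c = a * (b * c)
  compactlyGenerated : ∀ a : α, a = sSup {b : α | b ≤ a ∧ IsCompactElement b}
  mul_sup : ∀ a b c : α, a * (b ⊔ c) = a * b ⊔ a * c
  sup_mul : ∀ a b c : α, (a ⊔ b) * c = a * c ⊔ b * c
  top_compact : IsCompactElement (⊤ : α)
  top_mul : ∀ a : α, ⊤ * a = a
  mul_top : ∀ a : α, a * ⊤ = a
  compact_mul : ∀ a b : α, IsCompactElement a → IsCompactElement b → IsCompactElement (a * b)

/-- A prime element of an ideal lattice: `p ≠ ⊤` and `a * b ≤ p` implies `a ≤ p` or `b ≤ p`. -/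
def IsPrimeElt {α : Type*} [CompleteLattice α] [Mul α] (p : α) : Prop :=
  p ≠ ⊤ ∧ ∀ a b : α, a * b ≤ p → a ≤ p ∨ b ≤ p

/-- A semi-prime element of an ideal lattice: `b * b ≤ a` implies `b ≤ a`. -/
def IsSemiprimeElt {α : Type*} [CompleteLattice α] [Mul α] (a : α) : Prop :=
  ∀ b : α, b * b ≤ a → b ≤ a

/-- The prime spectrum of an ideal lattice: the set of prime elements. -/
def SpecL (α : Type*) [CompleteLattice α] [Mul α] : Type _ := {p : α // IsPrimeElt p}

/-- The Zariski-closed set `V(a) = {p ∈ Spec L : a ≤ p}`. -/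
def zV {α : Type*} [CompleteLattice α] [Mul α] (a : α) : Set (SpecL α) := {p | a ≤ p.1}

/-- The Zariski-open set `D(a) = {p ∈ Spec L : a ≰ p}`. -/
def zD {α : Type*} [CompleteLattice α] [Mul α] (a : α) : Set (SpecL α) := {p | ¬ a ≤ p.1}

/-- The Zariski topology on `SpecL α`: the open sets are exactly the sets `zD a`. -/
instance {α : Type*} [CompleteLattice α] [Mul α] : TopologicalSpace (SpecL α) :=
  TopologicalSpace.generateFrom {U : Set (SpecL α) | ∃ a : α, U = zD a}

/-!
The content is that a semi-prime element `a` is the infimum of the primes above it. If `x ≰ a`,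
choose a compact `c₀ ≤ x` with `c₀ ≰ a` and then, repeatedly, a compact `cₙ₊₁ ≤ cₙ * cₙ` with
`cₙ₊₁ ≰ a`, which exists since `a` is semi-prime. By compactness, Zorn's lemma gives an element
above `a` that is maximal among those above no `cₙ`, and it is prime because below any product
`cₘ * cₙ` there is another term of the sequence. On the topological side, multiplication turns
intersections of the sets `D(a)` into sets `D(a * b)`, so that every closed set is some `V(a)`; the
Galois connection between `V` and `inf` does the rest.
-/

open Set

section MSystem

variable {α : Type*}

/-- An m-system, the noncommutative analogue of a multiplicatively closed set, used to construct
prime elements. Only some element below each product `s * t`, not necessarily the product itself,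
has to lie in `S`. -/
structure IsMSystem [LE α] [Mul α] (S : Set α) : Prop where
  nonempty : S.Nonempty
  exists_le_mul : ∀ ⦃s⦄, s ∈ S → ∀ ⦃t⦄, t ∈ S → ∃ r ∈ S, r ≤ s * t

theorem IsMSystem.range_of_le_mul_self [Preorder α] [Mul α] [MulLeftMono α] [MulRightMono α]
    {c : ℕ → α} (hanti : Antitone c) (hc : ∀ n, c (n + 1) ≤ c n * c n) : IsMSystem (range c) where
  nonempty := range_nonempty c
  exists_le_mul := by
    rintro _ ⟨m, rfl⟩ _ ⟨n, rfl⟩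
    exact ⟨c (max m n + 1), mem_range_self _, (hc _).trans
      (mul_le_mul' (hanti (le_max_left m n)) (hanti (le_max_right m n)))⟩

variable [CompleteLattice α]

theorem exists_isCompactElement_le_not_le [IsCompactlyGenerated α] {a x : α} (hx : ¬ x ≤ a) :
    ∃ c, IsCompactElement c ∧ c ≤ x ∧ ¬ c ≤ a := by
  simpa only [le_iff_compact_le_imp (a := x), not_forall, exists_prop] using hx

theorem exists_maximal_forall_not_le {S : Set α} (hS : ∀ s ∈ S, IsCompactElement s) {a : α}
    (ha : ∀ s ∈ S, ¬ s ≤ a) : ∃ p, a ≤ p ∧ Maximal (fun q ↦ ∀ s ∈ S, ¬ s ≤ q) p := by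
  refine zorn_le_nonempty₀ {q | ∀ s ∈ S, ¬ s ≤ q} (fun C hCS hC q hq ↦ ?_) a ha
  refine ⟨sSup C, fun s hs hsC ↦ ?_, fun _ ↦ le_sSup⟩
  obtain ⟨r, hr, hsr⟩ := hS s hs C (sSup C) ⟨q, hq⟩ hC.directedOn (_root_.isLUB_sSup C) hsC
  exact hCS hr s hs hsr

variable [Mul α] [MulLeftMono α] [MulRightMono α]

theorem IsMSystem.isPrimeElt_of_maximal
    (sup_mul_sup_le : ∀ a b c : α, (a ⊔ b) * (a ⊔ c) ≤ a ⊔ b * c) {S : Set α} (hS : IsMSystem S)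
    {p : α} (hp : Maximal (fun q ↦ ∀ s ∈ S, ¬ s ≤ q) p) : IsPrimeElt p := by
  have exists_le_sup {u : α} (hu : ¬ u ≤ p) : ∃ s ∈ S, s ≤ p ⊔ u := by
    by_contra! h
    exact hu (le_sup_right.trans (hp.le_of_ge h le_sup_left))
  refine ⟨?_, fun u v huv ↦ ?_⟩
  · rintro rfl
    obtain ⟨s, hs⟩ := hS.nonempty
    exact hp.prop s hs le_top
  · by_contra! ⟨hu, hv⟩
    obtain ⟨s, hs, hsu⟩ := exists_le_sup hu
    obtain ⟨t, ht, htv⟩ := exists_le_sup hv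
    obtain ⟨r, hr, hrst⟩ := hS.exists_le_mul hs ht
    refine hp.prop r hr ?_
    calc r ≤ s * t := hrst
      _ ≤ (p ⊔ u) * (p ⊔ v) := mul_le_mul' hsu htv
      _ ≤ p ⊔ u * v := sup_mul_sup_le p u v
      _ = p := sup_eq_left.2 huv

variable [IsCompactlyGenerated α]

theorem IsSemiprimeElt.exists_isMSystem (mul_self_le : ∀ a : α, a * a ≤ a) {a x : α}
    (ha : IsSemiprimeElt a) (hx : ¬ x ≤ a) :
    ∃ S : Set α, IsMSystem S ∧ (∀ s ∈ S, IsCompactElement s ∧ ¬ s ≤ a) ∧ ∃ s ∈ S, s ≤ x := by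
  let T := {c : α // IsCompactElement c ∧ ¬ c ≤ a}
  have exists_le_mul_self (c : T) : ∃ d : T, d.1 ≤ c.1 * c.1 := by
    obtain ⟨d, hd, hdc, hda⟩ := exists_isCompactElement_le_not_le (mt (ha c.1) c.2.2)
    exact ⟨⟨d, hd, hda⟩, hdc⟩
  choose next hnext using exists_le_mul_self
  obtain ⟨c₀, hc₀, hc₀x, hc₀a⟩ := exists_isCompactElement_le_not_le hx
  let c (n : ℕ) : T := next^[n] ⟨c₀, hc₀, hc₀a⟩
  have hc (n : ℕ) : (c (n + 1)).1 ≤ (c n).1 * (c n).1 := by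
    simpa only [c, Function.iterate_succ_apply'] using hnext (c n)
  have hanti : Antitone fun n ↦ (c n).1 :=
    antitone_nat_of_succ_le fun n ↦ (hc n).trans (mul_self_le _)
  exact ⟨range fun n ↦ (c n).1, .range_of_le_mul_self hanti hc,
    forall_mem_range.2 fun n ↦ (c n).2, c₀, ⟨0, rfl⟩, hc₀x⟩

theorem IsSemiprimeElt.exists_isPrimeElt_not_le (mul_self_le : ∀ a : α, a * a ≤ a)
    (sup_mul_sup_le : ∀ a b c : α, (a ⊔ b) * (a ⊔ c) ≤ a ⊔ b * c) {a x : α}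
    (ha : IsSemiprimeElt a) (hx : ¬ x ≤ a) : ∃ p, IsPrimeElt p ∧ a ≤ p ∧ ¬ x ≤ p := by
  obtain ⟨S, hS, hSa, s, hs, hsx⟩ := ha.exists_isMSystem mul_self_le hx
  obtain ⟨p, hap, hp⟩ :=
    exists_maximal_forall_not_le (fun s hs ↦ (hSa s hs).1) (fun s hs ↦ (hSa s hs).2)
  exact ⟨p, hS.isPrimeElt_of_maximal sup_mul_sup_le hp, hap, fun hxp ↦ hp.prop s hs (hsx.trans hxp)⟩

end MSystem

section Spectrum

variable {α : Type*} [CompleteLattice α] [Mul α]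

theorem IsPrimeElt.isSemiprimeElt {p : α} (hp : IsPrimeElt p) : IsSemiprimeElt p :=
  fun b hb ↦ or_self_iff.1 (hp.2 b b hb)

theorem isSemiprimeElt_sInf {A : Set α} (hA : ∀ a ∈ A, IsSemiprimeElt a) :
    IsSemiprimeElt (sInf A) :=
  fun b hb ↦ le_sInf fun a ha ↦ hA a ha b (hb.trans (sInf_le ha))

theorem isSemiprimeElt_sInf_image_val (Y : Set (SpecL α)) :
    IsSemiprimeElt (sInf (Subtype.val '' Y)) :=
  isSemiprimeElt_sInf (forall_mem_image.2 fun p _ ↦ p.2.isSemiprimeElt)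

theorem le_sInf_image_val_iff_subset_zV {a : α} {Y : Set (SpecL α)} :
    a ≤ sInf (Subtype.val '' Y) ↔ Y ⊆ zV a :=
  le_sInf_iff.trans forall_mem_image

theorem gc_zV_sInf_image_val :
    GaloisConnection (fun a : α ↦ OrderDual.toDual (zV a))
      (fun Y ↦ sInf (Subtype.val '' OrderDual.ofDual Y)) :=
  fun _ _ ↦ le_sInf_image_val_iff_subset_zV.symm

theorem zD_iSup {ι : Sort*} (a : ι → α) : zD (⨆ i, a i) = ⋃ i, zD (a i) := by
  ext p
  simp only [zD, mem_ofPred_eq, mem_iUnion, iSup_le_iff, not_forall]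

theorem zD_top : zD (⊤ : α) = univ :=
  eq_univ_of_forall fun p h ↦ p.2.1 (top_le_iff.1 h)

theorem zD_mul (mul_le_inf : ∀ a b : α, a * b ≤ a ⊓ b) (a b : α) :
    zD (a * b) = zD a ∩ zD b := by
  ext p
  have mul_le_iff : a * b ≤ p.1 ↔ a ≤ p.1 ∨ b ≤ p.1 :=
    ⟨p.2.2 a b, fun h ↦ (mul_le_inf a b).trans (h.elim inf_le_of_left_le inf_le_of_right_le)⟩
  exact mul_le_iff.not.trans not_or

theorem isTopologicalBasis_zD (mul_le_inf : ∀ a b : α, a * b ≤ a ⊓ b) :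
    IsTopologicalBasis {U : Set (SpecL α) | ∃ a : α, U = zD a} := by
  rw [← insert_eq_of_mem (show univ ∈ {U : Set (SpecL α) | ∃ a, U = zD a} from ⟨⊤, zD_top.symm⟩)]
  refine isTopologicalBasis_of_subbasis_of_inter rfl ?_
  rintro _ ⟨a, rfl⟩ _ ⟨b, rfl⟩
  exact ⟨a * b, (zD_mul mul_le_inf a b).symm⟩

theorem isClosed_zV (a : α) : IsClosed (zV a) :=
  ⟨isOpen_generateFrom_of_mem ⟨a, rfl⟩⟩

theorem exists_eq_zD_of_isOpen (mul_le_inf : ∀ a b : α, a * b ≤ a ⊓ b) {U : Set (SpecL α)}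
    (hU : IsOpen U) : ∃ a : α, U = zD a := by
  obtain ⟨ι, V, rfl, hV⟩ := (isTopologicalBasis_zD mul_le_inf).open_eq_iUnion hU
  choose a ha using hV
  exact ⟨⨆ i, a i, (iUnion_congr ha).trans (zD_iSup a).symm⟩

theorem exists_eq_zV_of_isClosed (mul_le_inf : ∀ a b : α, a * b ≤ a ⊓ b) {Y : Set (SpecL α)}
    (hY : IsClosed Y) : ∃ a : α, Y = zV a := by
  obtain ⟨a, ha⟩ := exists_eq_zD_of_isOpen mul_le_inf hY.isOpen_compl
  exact ⟨a, compl_injective ha⟩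

theorem zV_sInf_image_val (mul_le_inf : ∀ a b : α, a * b ≤ a ⊓ b) {Y : Set (SpecL α)}
    (hY : IsClosed Y) : zV (sInf (Subtype.val '' Y)) = Y := by
  obtain ⟨a, rfl⟩ := exists_eq_zV_of_isClosed mul_le_inf hY
  exact gc_zV_sInf_image_val.l_u_l_eq_l a

theorem IsSemiprimeElt.sInf_image_val_zV [IsCompactlyGenerated α] [MulLeftMono α] [MulRightMono α]
    (mul_self_le : ∀ a : α, a * a ≤ a)
    (sup_mul_sup_le : ∀ a b c : α, (a ⊔ b) * (a ⊔ c) ≤ a ⊔ b * c) {a : α}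
    (ha : IsSemiprimeElt a) : sInf (Subtype.val '' zV a) = a := by
  refine le_antisymm ?_ (gc_zV_sInf_image_val.le_u_l a)
  by_contra h
  obtain ⟨p, hp, hap, hnp⟩ := ha.exists_isPrimeElt_not_le mul_self_le sup_mul_sup_le h
  exact hnp (sInf_le ⟨⟨p, hp⟩, hap, rfl⟩)

end Spectrum

/-- Applies for instance to the normal subgroups of a group, with the commutator as product. -/
theorem semiprime_closed_bijection_general {α : Type*} [CompleteLattice α] [IsCompactlyGenerated α]
    [Mul α] [MulLeftMono α] [MulRightMono α] (mul_le_inf : ∀ a b : α, a * b ≤ a ⊓ b)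
    (sup_mul_sup_le : ∀ a b c : α, (a ⊔ b) * (a ⊔ c) ≤ a ⊔ b * c) :
    (∀ a : α, IsClosed (zV a)) ∧
    Antitone (zV : α → Set (SpecL α)) ∧
    (∀ a : α, IsSemiprimeElt a → sInf (Subtype.val '' zV a) = a) ∧
    (∀ Y : Set (SpecL α), IsClosed Y →
      IsSemiprimeElt (sInf (Subtype.val '' Y)) ∧ zV (sInf (Subtype.val '' Y)) = Y) := by
  have mul_self_le (a : α) : a * a ≤ a := (mul_le_inf a a).trans_eq (inf_idem a)
  exact ⟨isClosed_zV, gc_zV_sInf_image_val.monotone_l,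
    fun _ ha ↦ ha.sInf_image_val_zV mul_self_le sup_mul_sup_le,
    fun Y hY ↦ ⟨isSemiprimeElt_sInf_image_val Y, zV_sInf_image_val mul_le_inf hY⟩⟩

namespace IsIdealLattice

variable {α : Type*} [CompleteLattice α] [Mul α]

theorem isCompactlyGenerated (hL : IsIdealLattice α) : IsCompactlyGenerated α :=
  ⟨fun a ↦ ⟨_, fun _ hb ↦ hb.2, (hL.compactlyGenerated a).symm⟩⟩

theorem mulLeftMono (hL : IsIdealLattice α) : MulLeftMono α :=
  ⟨fun a b c hbc ↦ sup_eq_right.1 (by rw [← hL.mul_sup, sup_eq_right.2 hbc])⟩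

theorem mulRightMono (hL : IsIdealLattice α) : MulRightMono α :=
  ⟨fun a b c hbc ↦ sup_eq_right.1 (by simp only [Function.swap, ← hL.sup_mul, sup_eq_right.2 hbc])⟩

theorem mul_le_inf (hL : IsIdealLattice α) (a b : α) : a * b ≤ a ⊓ b := by
  have := hL.mulLeftMono
  have := hL.mulRightMono
  exact le_inf ((mul_le_mul_right le_top a).trans_eq (hL.mul_top a))
    ((mul_le_mul_left le_top b).trans_eq (hL.top_mul b))

theorem sup_mul_sup_le (hL : IsIdealLattice α) (a b c : α) : (a ⊔ b) * (a ⊔ c) ≤ a ⊔ b * c := by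
  rw [hL.mul_sup, hL.sup_mul a b c]
  exact sup_le ((hL.mul_le_inf _ a).trans (inf_le_right.trans le_sup_left))
    (sup_le_sup_right ((hL.mul_le_inf a c).trans inf_le_left) _)

end IsIdealLattice

/-- The assignments `a ↦ V(a)` and `Y ↦ inf Y` are mutually inverse order-reversing
bijections between semi-prime elements of `L` and closed subsets of `Spec L`. -/
theorem semiprime_closed_bijection {α : Type*} [CompleteLattice α] [Mul α]
    (hL : IsIdealLattice α) :
    (∀ a : α, IsClosed (zV a)) ∧
    (∀ a b : α, IsSemiprimeElt a → IsSemiprimeElt b → a ≤ b → zV b ⊆ zV a) ∧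
    (∀ a : α, IsSemiprimeElt a → sInf (Subtype.val '' zV a) = a) ∧
    (∀ Y : Set (SpecL α), IsClosed Y →
      IsSemiprimeElt (sInf (Subtype.val '' Y)) ∧ zV (sInf (Subtype.val '' Y)) = Y) := by
  have := hL.isCompactlyGenerated
  have := hL.mulLeftMono
  have := hL.mulRightMono
  obtain ⟨hclosed, hanti, hbij⟩ :=
    semiprime_closed_bijection_general hL.mul_le_inf hL.sup_mul_sup_le
  exact ⟨hclosed, fun _ _ _ _ hab ↦ hanti hab, hbij⟩
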